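/- For the Weierstrass zeta function of the lattice L_ω = ω·ℤ[τ] with invariants g₂ = 0, g₃ = 1, the quasi-period satisfies: for every α ∈ L_ω and every z ∉ L_ω, ζ(z + α, L_ω) − ζ(z, L_ω) = 2π·ᾱ/(√3·ω²), where ᾱ is the complex conjugate of α. -/

import Mathlib

noncomputable section

open Complex Real ComplexConjugate

/-- `τ = (−1+√−3)/2`, a primitive cube root of unity. -/
def tau : ℂ := (-1 + Real.sqrt 3 * Complex.I) / 2

/-- `√−3 = 1 + 2τ`, the square root of `−3` with positive imaginary part. -/
def sqrtm3 : ℂ := Real.sqrt 3 * Complex.I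

/-- The ring of integers `O_K = ℤ[τ]` of `K = ℚ(√−3)`, as a subring of `ℂ`. -/
def Eis : Subring ℂ := Subring.closure {tau}

/-- `τ` as an element of `ℤ[τ]`. -/
def tauO : Eis := ⟨tau, Subring.subset_closure rfl⟩

/-- `√−3` as an element of `ℤ[τ]`. -/
def sqrtm3O : Eis := 1 + 2 * tauO

/-- Membership in the lattice `L_ω = ω·ℤ[τ]`. -/
def inLattice (ω : ℝ) (z : ℂ) : Prop := ∃ a : Eis, z = (ω : ℂ) * a

/-- The Weierstrass `℘`-function of the lattice `L_ω = ω·ℤ[τ]`. -/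
def wp (ω : ℝ) (z : ℂ) : ℂ :=
  1 / z ^ 2 + ∑' a : {w : ℂ // inLattice ω w ∧ w ≠ 0},
    (1 / (z - (a : ℂ)) ^ 2 - 1 / (a : ℂ) ^ 2)

/-- The Weierstrass `ζ`-function of the lattice `L_ω = ω·ℤ[τ]`. -/
def wzeta (ω : ℝ) (z : ℂ) : ℂ :=
  1 / z + ∑' a : {w : ℂ // inLattice ω w ∧ w ≠ 0},
    (1 / (z - (a : ℂ)) + 1 / (a : ℂ) + z / (a : ℂ) ^ 2)

/-- The real cube root of 2, as a complex number. -/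
def cbrt2 : ℂ := ((2 : ℝ) ^ ((1 : ℝ) / 3) : ℝ)

/-- The real cube root of 4, as a complex number. -/
def cbrt4 : ℂ := ((4 : ℝ) ^ ((1 : ℝ) / 3) : ℝ)

/-!
Translating `z` by a period `c` of the lattice `c(ℤτ + ℤ)` changes the summands of `ζ` by a
telescoping term plus `c / l²`, so `ζ(z + c) - ζ(z) = G₂(τ) / c`, the sum being taken in
Eisenstein's order. Write `G₂(τ) = G₂*(τ) + π / Im τ`. Since `G₂*` is modular of weight two, the
additive map `α ↦ (G₂*(τ) / c²) α + (π / (Im τ |c|²)) ᾱ` does not change when the basis `(cτ, c)`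
is replaced by `(-c, cτ)`; it therefore gives the increment of `ζ` along `cτ` as well, hence along
every period. At a point `τ` with a nontrivial stabilizer in the modular group modularity forces
`G₂*(τ) = 0`, and only the term in `ᾱ` survives.
-/

open Filter Topology EisensteinSeries MatrixGroups ModularForm ModularGroup
open UpperHalfPlane hiding I

section QuasiPeriods

variable {G H : Type*} [AddGroup G] [AddGroup H]

/-- The group of quasi-periods of `f : G → H` along which the increment of `f` is constant and
given by a prescribed homomorphism `φ`. -/
def quasiPeriods (f : G → H) (φ : G →+ H) : AddSubgroup G where
  carrier := {a | ∀ x, f (x + a) = f x + φ a}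
  zero_mem' := by simp
  add_mem' := fun {a b} ha hb x => by rw [← add_assoc, hb, ha, map_add, add_assoc]
  neg_mem' := fun {a} ha x => by
    rw [map_neg, eq_add_neg_iff_add_eq, ← ha, neg_add_cancel_right]

lemma mem_quasiPeriods {f : G → H} {φ : G →+ H} {a : G} :
    a ∈ quasiPeriods f φ ↔ ∀ x, f (x + a) = f x + φ a :=
  Iff.rfl

end QuasiPeriods

lemma hasSum_int_sub_eq_zero {E : Type*} [AddCommGroup E] [TopologicalSpace E]
    [IsTopologicalAddGroup E] [T2Space E] {f : ℤ → E} (hf : Tendsto f cofinite (𝓝 0))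
    (hs : Summable fun n => f n - f (n + 1)) : HasSum (fun n => f n - f (n + 1)) 0 := by
  have hsum : HasSum (fun n => f n - f (n + 1)) 0 (SummationFilter.symmetricIco ℤ) := by
    simp only [SummationFilter.hasSum_symmetricIco_int_iff, Finset.sum_Ico_int_sub]
    rw [Int.cofinite_eq, tendsto_sup] at hf
    have hbot := hf.1.comp (tendsto_neg_atTop_atBot.comp tendsto_natCast_atTop_atTop)
    have htop := hf.2.comp (tendsto_natCast_atTop_atTop (R := ℤ))
    simpa only [sub_zero, Function.comp_def] using hbot.sub htop
  rw [← hsum.tsum_eq, tsum_eq_of_summable_unconditional hs]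
  exact hs.hasSum

lemma tendsto_one_div_sub_intCast_mul {c : ℂ} (hc : c ≠ 0) (w : ℂ) :
    Tendsto (fun n : ℤ => 1 / (w - n * c)) cofinite (𝓝 0) := by
  have hcast : Tendsto (Int.cast : ℤ → ℂ) cofinite (Bornology.cobounded ℂ) := by
    rw [Int.cofinite_eq]
    exact tendsto_intCast_atBot_sup_atTop_cobounded
  simp only [one_div]
  exact tendsto_inv₀_cobounded.comp
    ((tendsto_const_sub_cobounded w).comp ((tendsto_mul_right_cobounded hc).comp hcast))

lemma sq_mul_le_cube_add_cube {x y : ℝ} (hx : 0 ≤ x) (hy : 0 ≤ y) :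
    x ^ 2 * y ≤ x ^ 3 + y ^ 3 := by
  nlinarith [mul_nonneg (add_nonneg hx hy) (sq_nonneg (x - y)), mul_nonneg hx (sq_nonneg y)]

/-- The summand of the Weierstrass zeta function at the lattice point `l`. Because `1 / 0 = 0`,
the point `l = 0` contributes `1 / z`. -/
def zetaTerm (z l : ℂ) : ℂ := 1 / (z - l) + 1 / l + z / l ^ 2

/-- The Weierstrass zeta function of a lattice `Λ`. At a point `z = l` of `Λ` the
infinite term `1 / (z - l)` is dropped. -/
def latticeZeta (Λ : Submodule ℤ ℂ) (z : ℂ) : ℂ := ∑' l : Λ, zetaTerm z l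

lemma zetaTerm_zero (z : ℂ) : zetaTerm z 0 = 1 / z := by
  simp [zetaTerm]

lemma norm_zetaTerm_le {z l : ℂ} (hl : l ≠ 0) (hlz : l ≠ z) :
    ‖zetaTerm z l‖ ≤ ‖z‖ ^ 2 * (‖l‖⁻¹ ^ 3 + ‖l - z‖⁻¹ ^ 3) := by
  have hzl : z - l ≠ 0 := sub_ne_zero.2 hlz.symm
  calc ‖zetaTerm z l‖ = ‖z ^ 2 / (l ^ 2 * (z - l))‖ := by
        congr 1
        unfold zetaTerm
        field_simp
        ring
    _ = ‖z‖ ^ 2 * (‖l‖⁻¹ ^ 2 * ‖l - z‖⁻¹) := by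
        rw [norm_div, norm_mul, norm_pow, norm_pow, norm_sub_rev z, div_eq_mul_inv, mul_inv,
          inv_pow]
    _ ≤ _ := by
        gcongr
        exact sq_mul_le_cube_add_cube (by positivity) (by positivity)

lemma summable_zetaTerm (Λ : Submodule ℤ ℂ) [DiscreteTopology Λ] [IsZLattice ℝ Λ] (z : ℂ) :
    Summable fun l : Λ => zetaTerm z l := by
  have hrank : Module.finrank ℤ Λ < 3 := by
    rw [ZLattice.rank ℝ Λ, Complex.finrank_real_complex]
    norm_num
  refine Summable.of_norm_bounded_eventually (((ZLattice.summable_norm_pow_inv Λ 3 hrank).add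
    (ZLattice.summable_norm_sub_inv_pow Λ 3 hrank z)).mul_left (‖z‖ ^ 2)) ?_
  have hz : ∀ᶠ l : Λ in cofinite, (l : ℂ) ≠ z :=
    Subtype.val_injective.tendsto_cofinite.eventually (eventually_cofinite_ne z)
  filter_upwards [eventually_cofinite_ne (0 : Λ), hz] with l hl hlz
  exact norm_zetaTerm_le (by simpa using hl) hlz

-- Since `1 / 0 = 0`, this also holds when one of the denominators vanishes.
lemma zetaTerm_add_sub_zetaTerm (z c l : ℂ) :
    zetaTerm (z + c) l - zetaTerm z l = (1 / (z + c - l) - 1 / (z - l)) + c / l ^ 2 := by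
  unfold zetaTerm
  ring

/-- The basis `(cτ, c)` of the lattice `c(ℤτ + ℤ)`. -/
def scaledPair (c : ℂ) (hc : c ≠ 0) (τ : ℍ) : PeriodPair where
  ω₁ := c * τ
  ω₂ := c
  indep := by
    rw [LinearIndependent.pair_iff]
    intro s t h
    have h' : c * (s * τ + t) = 0 := by
      rw [Complex.real_smul, Complex.real_smul] at h
      linear_combination h
    have hst : (s * τ + t : ℂ) = 0 := (mul_eq_zero.1 h').resolve_left hc
    have hs : s = 0 := by simpa [τ.im_ne_zero] using congrArg Complex.im hst
    exact ⟨hs, by simpa [hs] using hst⟩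

section ScaledPair

variable {c : ℂ} (hc : c ≠ 0) (τ : ℍ)

lemma coe_latticeEquivProd_symm_scaledPair (p : ℤ × ℤ) :
    (((scaledPair c hc τ).latticeEquivProd.symm p : (scaledPair c hc τ).lattice) : ℂ) =
      c * (p.1 * τ + p.2) := by
  rw [PeriodPair.latticeEquiv_symm_apply]
  simp only [scaledPair]
  ring

lemma mem_lattice_scaledPair {x : ℂ} :
    x ∈ (scaledPair c hc τ).lattice ↔ ∃ m n : ℤ, x = c * (m * τ + n) := by
  rw [PeriodPair.mem_lattice]
  refine exists₂_congr fun m n => ?_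
  rw [eq_comm, show m * (scaledPair c hc τ).ω₁ + n * (scaledPair c hc τ).ω₂ = c * (m * τ + n) by
    simp only [scaledPair]; ring]

lemma lattice_scaledPair_S_smul :
    (scaledPair (c * τ) (mul_ne_zero hc τ.ne_zero) (S • τ)).lattice =
      (scaledPair c hc τ).lattice := by
  ext x
  have hτ : (τ : ℂ) ≠ 0 := τ.ne_zero
  simp only [mem_lattice_scaledPair, modular_S_smul, inv_neg, mul_neg]
  constructor
  · rintro ⟨m, n, rfl⟩
    exact ⟨n, -m, by push_cast; field_simp; ring⟩
  · rintro ⟨m, n, rfl⟩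
    exact ⟨-n, m, by push_cast; field_simp; ring⟩

include hc in
lemma summable_prod_zetaTerm (z : ℂ) :
    Summable fun p : ℤ × ℤ => zetaTerm z (c * (p.1 * τ + p.2)) := by
  simpa only [Function.comp_def, LinearEquiv.coe_toEquiv, EquivLike.coe_coe,
    coe_latticeEquivProd_symm_scaledPair] using
    (scaledPair c hc τ).latticeEquivProd.symm.toEquiv.summable_iff.2
      (summable_zetaTerm (scaledPair c hc τ).lattice z)

lemma latticeZeta_scaledPair (z : ℂ) :
    latticeZeta (scaledPair c hc τ).lattice z =
      ∑' p : ℤ × ℤ, zetaTerm z (c * (p.1 * τ + p.2)) := by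
  rw [latticeZeta, ← (scaledPair c hc τ).latticeEquivProd.symm.toEquiv.tsum_eq]
  simp [coe_latticeEquivProd_symm_scaledPair]

include hc in
lemma hasSum_zetaTerm_add_sub_zetaTerm (z : ℂ) (m : ℤ) :
    HasSum (fun n : ℤ => zetaTerm (z + c) (c * (m * τ + n)) - zetaTerm z (c * (m * τ + n)))
      (c⁻¹ * e2Summand m τ) := by
  let f : ℤ → ℂ := fun n => 1 / (z + c - c * m * τ - n * c)
  have hsplit : (fun n : ℤ => zetaTerm (z + c) (c * (m * τ + n)) -
      zetaTerm z (c * (m * τ + n))) =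
      fun n : ℤ => (f n - f (n + 1)) + c⁻¹ * eisSummand 2 ![m, n] τ := by
    funext n
    have hleft : z + c - c * (m * τ + n) = z + c - c * m * τ - n * c := by ring
    have hright : z - c * (m * τ + n) = z + c - c * m * τ - (n + 1 : ℤ) * c := by
      push_cast; ring
    have heis : c / (c * (m * τ + n)) ^ 2 = c⁻¹ * eisSummand 2 ![m, n] τ := by
      simp only [eisSummand, Matrix.cons_val_zero, Matrix.cons_val_one, zpow_neg, mul_pow]
      norm_cast
      field_simp
    rw [zetaTerm_add_sub_zetaTerm, heis, hleft, hright]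
  have heis := (e2Summand_summable m τ).mul_left c⁻¹
  have hrow := ((summable_prod_zetaTerm hc τ (z + c)).sub
    (summable_prod_zetaTerm hc τ z)).prod_factor m
  rw [hsplit] at hrow ⊢
  have htel : Summable fun n => f n - f (n + 1) := by
    simpa only [add_sub_cancel_right] using hrow.sub heis
  simpa only [e2Summand, tsum_mul_left, zero_add] using
    (hasSum_int_sub_eq_zero (tendsto_one_div_sub_intCast_mul hc _) htel).add heis.hasSum

lemma latticeZeta_scaledPair_add (z : ℂ) :
    latticeZeta (scaledPair c hc τ).lattice (z + c) =
      latticeZeta (scaledPair c hc τ).lattice z + G2 τ / c := by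
  have hadd := summable_prod_zetaTerm hc τ (z + c)
  have hz := summable_prod_zetaTerm hc τ z
  have hrow := hasSum_zetaTerm_add_sub_zetaTerm hc τ z
  have hcol : Summable fun m => c⁻¹ * e2Summand m τ := by
    simpa only [(hrow _).tsum_eq] using (hadd.sub hz).prod
  have he2 : Summable (e2Summand · τ) := (summable_mul_left_iff (inv_ne_zero hc)).1 hcol
  rw [← sub_eq_iff_eq_add', latticeZeta_scaledPair, latticeZeta_scaledPair, ← hadd.tsum_sub hz,
    (hadd.sub hz).tsum_prod]
  simp only [(hrow _).tsum_eq]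
  rw [tsum_mul_left, G2, div_eq_inv_mul,
    tsum_eq_of_summable_unconditional (L := SummationFilter.symmetricIcc ℤ) he2]

end ScaledPair

/-- The nonholomorphic completion `G₂*` of the Eisenstein series `G₂`. -/
def completedG2 (τ : ℍ) : ℂ := G2 τ - π / τ.im

lemma im_denom (γ : SL(2, ℤ)) (τ : ℍ) : (denom γ τ).im = γ 1 0 * τ.im := by
  simp [denom_apply]

lemma inv_im_smul_mul_denom_zpow (γ : SL(2, ℤ)) (τ : ℍ) :
    ((γ • τ).im : ℂ)⁻¹ * denom γ τ ^ (-2 : ℤ) = (τ.im : ℂ)⁻¹ - 2 * I * γ 1 0 / denom γ τ := by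
  have hd : denom γ τ ≠ 0 := denom_ne_zero γ τ
  have him : (τ.im : ℂ) ≠ 0 := mod_cast τ.im_ne_zero
  have hconj : conj (denom γ τ) = denom γ τ - 2 * I * γ 1 0 * τ.im := by
    have h := Complex.sub_conj (denom γ τ)
    rw [im_denom] at h
    push_cast at h
    linear_combination -h
  have hmul : (Complex.normSq (denom γ τ) : ℂ) =
      denom γ τ * (denom γ τ - 2 * I * γ 1 0 * τ.im) := by
    rw [← Complex.mul_conj, hconj]
  rw [ModularGroup.im_smul_eq_div_normSq, Complex.ofReal_div, inv_div, hmul, zpow_neg]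
  norm_cast
  push_cast
  field_simp

lemma completedG2_slash_action (γ : SL(2, ℤ)) : completedG2 ∣[(2 : ℤ)] γ = completedG2 := by
  ext τ
  have hG2 := congrFun (G2_slash_action γ) τ
  have him := inv_im_smul_mul_denom_zpow γ τ
  rw [SL_slash_apply, Pi.sub_apply, D2] at hG2
  rw [SL_slash_apply, completedG2, completedG2]
  linear_combination hG2 - π * him

lemma completedG2_S_smul (τ : ℍ) : completedG2 (S • τ) = τ ^ 2 * completedG2 τ := by
  have h := congrFun (completedG2_slash_action S) τ
  rw [SL_slash_apply, denom_S, zpow_neg, ← div_eq_mul_inv,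
    div_eq_iff (zpow_ne_zero 2 τ.ne_zero)] at h
  rw [h, mul_comm]
  norm_cast

lemma completedG2_eq_zero_of_smul_eq {γ : SL(2, ℤ)} {τ : ℍ} (hfix : γ • τ = τ)
    (hγ : γ 1 0 ≠ 0) : completedG2 τ = 0 := by
  have h := congrFun (completedG2_slash_action γ) τ
  rw [SL_slash_apply, hfix] at h
  have him : (denom γ τ).im ≠ 0 := by
    rw [im_denom]
    exact mul_ne_zero (mod_cast hγ) τ.im_ne_zero
  have hd : denom γ τ ^ (-2 : ℤ) ≠ 1 := by
    rw [zpow_neg, inv_ne_one, zpow_ofNat, Ne, sq_eq_one_iff]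
    rintro (h | h) <;> simp [h] at him
  by_contra h0
  exact hd ((mul_eq_left₀ h0).1 h)

/-- The homomorphism sending a period `α` of the lattice `c(ℤτ + ℤ)` to the increment of the zeta
function along `α`, extended to an `ℝ`-linear function of `α ∈ ℂ`. -/
def zetaIncrement (c : ℂ) (τ : ℍ) : ℂ →+ ℂ where
  toFun α := completedG2 τ / c ^ 2 * α + π / (τ.im * Complex.normSq c) * conj α
  map_zero' := by simp
  map_add' α β := by
    rw [map_add]
    ring

lemma zetaIncrement_apply (c : ℂ) (τ : ℍ) (α : ℂ) :
    zetaIncrement c τ α =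
      completedG2 τ / c ^ 2 * α + π / (τ.im * Complex.normSq c) * conj α :=
  rfl

lemma zetaIncrement_self {c : ℂ} (hc : c ≠ 0) (τ : ℍ) : zetaIncrement c τ c = G2 τ / c := by
  have him : (τ.im : ℂ) ≠ 0 := mod_cast τ.im_ne_zero
  have hconj : conj c ≠ 0 := (map_ne_zero _).2 hc
  rw [zetaIncrement_apply, completedG2, ← Complex.mul_conj]
  field_simp
  ring

lemma zetaIncrement_S_smul (c : ℂ) (τ : ℍ) :
    zetaIncrement (c * τ) (S • τ) = zetaIncrement c τ := by
  ext α
  have hcov : (S • τ).im * Complex.normSq (c * τ) = τ.im * Complex.normSq c := by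
    have hτ : Complex.normSq τ ≠ 0 := τ.normSq_ne_zero
    rw [ModularGroup.im_smul_eq_div_normSq, denom_S, Complex.normSq_mul]
    field_simp
  rw [zetaIncrement_apply, zetaIncrement_apply, completedG2_S_smul, mul_pow, mul_comm (c ^ 2),
    mul_div_mul_left _ _ (pow_ne_zero 2 τ.ne_zero), ← Complex.ofReal_mul, hcov,
    Complex.ofReal_mul]

lemma mem_quasiPeriods_latticeZeta_scaledPair {c : ℂ} (hc : c ≠ 0) (τ : ℍ) :
    c ∈ quasiPeriods (latticeZeta (scaledPair c hc τ).lattice) (zetaIncrement c τ) := by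
  intro z
  rw [latticeZeta_scaledPair_add, zetaIncrement_self hc]

theorem lattice_le_quasiPeriods_latticeZeta {c : ℂ} (hc : c ≠ 0) (τ : ℍ) :
    (scaledPair c hc τ).lattice.toAddSubgroup ≤
      quasiPeriods (latticeZeta (scaledPair c hc τ).lattice) (zetaIncrement c τ) := by
  intro α hα
  have hone := mem_quasiPeriods_latticeZeta_scaledPair hc τ
  have htau := mem_quasiPeriods_latticeZeta_scaledPair (mul_ne_zero hc τ.ne_zero) (S • τ)
  rw [lattice_scaledPair_S_smul hc, zetaIncrement_S_smul] at htau
  obtain ⟨m, n, rfl⟩ := (mem_lattice_scaledPair hc τ).1 hα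
  rw [show c * (m * τ + n) = m • (c * τ) + n • c by simp only [zsmul_eq_mul]; ring]
  exact add_mem (zsmul_mem htau m) (zsmul_mem hone n)

lemma sqrt_three_sq : ((√3 : ℝ) : ℂ) ^ 2 = 3 := by
  norm_cast
  exact Real.sq_sqrt zero_le_three

lemma tau_sq : tau ^ 2 = -1 - tau := by
  unfold tau
  linear_combination (I ^ 2 / 4) * sqrt_three_sq + (3 / 4 : ℂ) * I_sq

lemma tau_im : tau.im = √3 / 2 := by
  simp [tau]

/-- `τ` as a point of the upper half-plane. -/
def tauUpperHalfPlane : ℍ := ⟨tau, by rw [tau_im]; positivity⟩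

lemma coe_tauUpperHalfPlane : (tauUpperHalfPlane : ℂ) = tau := rfl

lemma S_mul_T_smul_tauUpperHalfPlane : (S * T) • tauUpperHalfPlane = tauUpperHalfPlane := by
  rw [mul_smul, modular_T_smul, modular_S_smul, UpperHalfPlane.ext_iff, UpperHalfPlane.coe_mk,
    coe_vadd, coe_tauUpperHalfPlane]
  refine inv_eq_of_mul_eq_one_right ?_
  push_cast
  linear_combination -tau_sq

lemma completedG2_tauUpperHalfPlane : completedG2 tauUpperHalfPlane = 0 :=
  completedG2_eq_zero_of_smul_eq S_mul_T_smul_tauUpperHalfPlane (by decide)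

lemma zetaIncrement_tauUpperHalfPlane (ω : ℝ) (α : ℂ) :
    zetaIncrement ω tauUpperHalfPlane α = 2 * π * conj α / (√3 * ω ^ 2) := by
  have him : tauUpperHalfPlane.im = √3 / 2 := tau_im
  rw [zetaIncrement_apply, completedG2_tauUpperHalfPlane, him, Complex.normSq_ofReal]
  push_cast
  ring

lemma mem_Eis_iff {x : ℂ} : x ∈ Eis ↔ ∃ m n : ℤ, x = m * tau + n := by
  constructor
  · intro hx
    induction hx using Subring.closure_induction with
    | mem x hx => exact ⟨1, 0, by simpa using hx⟩
    | zero => exact ⟨0, 0, by simp⟩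
    | one => exact ⟨0, 1, by simp⟩
    | add x y _ _ hx hy =>
      obtain ⟨a, b, rfl⟩ := hx
      obtain ⟨c, d, rfl⟩ := hy
      exact ⟨a + c, b + d, by push_cast; ring⟩
    | neg x _ hx =>
      obtain ⟨a, b, rfl⟩ := hx
      exact ⟨-a, -b, by push_cast; ring⟩
    | mul x y _ _ hx hy =>
      obtain ⟨a, b, rfl⟩ := hx
      obtain ⟨c, d, rfl⟩ := hy
      exact ⟨a * d + b * c - a * c, b * d - a * c, by
        push_cast; linear_combination (a * c : ℂ) * tau_sq⟩
  · rintro ⟨m, n, rfl⟩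
    exact add_mem (mul_mem (intCast_mem _ _) tauO.2) (intCast_mem _ _)

lemma inLattice_iff_mem_lattice {ω : ℝ} (hω : (ω : ℂ) ≠ 0) {z : ℂ} :
    inLattice ω z ↔ z ∈ (scaledPair ω hω tauUpperHalfPlane).lattice := by
  rw [mem_lattice_scaledPair, coe_tauUpperHalfPlane]
  constructor
  · rintro ⟨a, rfl⟩
    obtain ⟨m, n, ha⟩ := mem_Eis_iff.1 a.2
    exact ⟨m, n, by rw [ha]⟩
  · rintro ⟨m, n, rfl⟩
    exact ⟨⟨_, mem_Eis_iff.2 ⟨m, n, rfl⟩⟩, rfl⟩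

lemma latticeZeta_eq_one_div_add_tsum (Λ : Submodule ℤ ℂ) [DiscreteTopology Λ] [IsZLattice ℝ Λ]
    (z : ℂ) :
    latticeZeta Λ z = 1 / z + ∑' l : {l : ℂ // l ∈ Λ ∧ l ≠ 0}, zetaTerm z l := by
  have hs : Summable ((Λ : Set ℂ).indicator (zetaTerm z)) :=
    summable_subtype_iff_indicator.1 (summable_zetaTerm Λ z)
  have hne : (fun l => if l = 0 then 0 else (Λ : Set ℂ).indicator (zetaTerm z) l) =
      {l | l ∈ Λ ∧ l ≠ 0}.indicator (zetaTerm z) := by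
    ext l
    by_cases hl : l = 0 <;> by_cases hmem : l ∈ Λ <;> simp [hl, hmem]
  calc latticeZeta Λ z = ∑' l, (Λ : Set ℂ).indicator (zetaTerm z) l :=
        tsum_subtype (Λ : Set ℂ) (zetaTerm z)
    _ = zetaTerm z 0 + ∑' l, {l | l ∈ Λ ∧ l ≠ 0}.indicator (zetaTerm z) l := by
        rw [hs.tsum_eq_add_tsum_ite 0, hne, Set.indicator_of_mem Λ.zero_mem]
    _ = _ := by
        rw [zetaTerm_zero, ← tsum_subtype]
        rfl

lemma wzeta_eq_latticeZeta {ω : ℝ} (hω : (ω : ℂ) ≠ 0) (z : ℂ) :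
    wzeta ω z = latticeZeta (scaledPair ω hω tauUpperHalfPlane).lattice z := by
  rw [latticeZeta_eq_one_div_add_tsum, wzeta,
    ← (Equiv.subtypeEquivRight fun l => and_congr_left' (inLattice_iff_mem_lattice hω)).tsum_eq]
  rfl

theorem wzeta_quasi_periods_general (ω : ℝ) (hω : ω ≠ 0) :
    ∀ α z : ℂ, inLattice ω α → ¬ inLattice ω z →
      wzeta ω (z + α) - wzeta ω z = 2 * π * conj α / (√3 * ω ^ 2) := by
  intro α z hα _
  have hω' : (ω : ℂ) ≠ 0 := mod_cast hω
  have hperiod := lattice_le_quasiPeriods_latticeZeta hω' tauUpperHalfPlane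
    ((inLattice_iff_mem_lattice hω').1 hα)
  rw [wzeta_eq_latticeZeta hω', wzeta_eq_latticeZeta hω', mem_quasiPeriods.1 hperiod z,
    add_sub_cancel_left, zetaIncrement_tauUpperHalfPlane]

/-- From [Qiu]: the quasi-periods of `ζ(·, L_ω)` are `η(α, L_ω) = ζ(z + α) − ζ(z) = 2π·ᾱ/(√3·ω²)` for `α ∈ L_ω` and `z ∉ L_ω`.
Here `ω > 0` is pinned down by the differential equation `℘′² = 4℘³ − 1` for the
lattice `L_ω = ω·ℤ[τ]` (equivalently, the lattice invariants are `g₂ = 0`, `g₃ = 1`). -/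
theorem wzeta_quasi_periods
    (ω : ℝ) (hω : 0 < ω)
    (hODE : ∀ z : ℂ, ¬ inLattice ω z → deriv (wp ω) z ^ 2 = 4 * wp ω z ^ 3 - 1) :
    ∀ α z : ℂ, inLattice ω α → ¬ inLattice ω z →
      wzeta ω (z + α) - wzeta ω z =
        2 * (Real.pi : ℂ) * (starRingEnd ℂ) α / ((Real.sqrt 3 : ℂ) * (ω : ℂ) ^ 2) := by
  exact wzeta_quasi_periods_general ω hω.ne'
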